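/- arXiv:1801.06290 — 2 statements merged into one kernel-verified Lean document; each statement's English description precedes it below -/
import Mathlib

section
/- Every finite set S of n ≥ 2 points in general position in the plane admits a geometric graph G on S with O(n² · log log n / log n) edges such that every pair of points of S is connected in G by a path whose edge vectors all lie in a common closed 90° wedge (i.e., G is angle-monotone of width 90°). Consequently G is a √2-spanner of S. -/
open Real

noncomputable section

/-- Euclidean dot product of two plane vectors (represented as complex numbers). -/
def dot2 (u v : ℂ) : ℝ := u.re * v.re + u.im * v.im

/-- A finite planar point set is in general position if no three distinct points are collinear. -/
def GenPos (S : Finset ℂ) : Prop :=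
  ∀ p ∈ S, ∀ q ∈ S, ∀ r ∈ S, p ≠ q → p ≠ r → q ≠ r → ¬ Collinear ℝ ({p, q, r} : Set ℂ)

/-! ### Frames, steps and connectivity -/

def AM.F (u v : ℂ) : Prop := 0 ≤ v.re * u.re + v.im * u.im ∧ 0 ≤ v.im * u.re - v.re * u.im

def AM.St (R : Set (ℂ × ℂ)) (u x y : ℂ) : Prop := ((x, y) ∈ R ∨ (y, x) ∈ R) ∧ AM.F u (y - x)

def AM.Cn (R : Set (ℂ × ℂ)) (s t : ℂ) : Prop := ∃ u : ℂ, u ≠ 0 ∧ Relation.ReflTransGen (AM.St R u) s t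

namespace AM

theorem Cn.symm {R : Set (ℂ × ℂ)} {s t : ℂ} (h : Cn R s t) : Cn R t s := by
  obtain ⟨u, hu, h⟩ := h
  refine ⟨-u, neg_ne_zero.2 hu, ?_⟩
  induction h with
  | refl => exact .refl
  | tail _ hbc ih =>
    refine Relation.ReflTransGen.head ?_ ih
    obtain ⟨h1, h2, h3⟩ := hbc
    refine ⟨h1.symm, ?_, ?_⟩
    · simp only [Complex.sub_re, Complex.sub_im, Complex.neg_re, Complex.neg_im] at *; linarith
    · simp only [Complex.sub_re, Complex.sub_im, Complex.neg_re, Complex.neg_im] at *; linarith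

theorem walk {R : Set (ℂ × ℂ)} {c : ℕ → ℂ} {u : ℂ} (hR : ∀ i, (c i, c (i + 1)) ∈ R) {i i' : ℕ}
    (h : i ≤ i') (hF : ∀ m, i ≤ m → m < i' → F u (c (m + 1) - c m)) :
    Relation.ReflTransGen (St R u) (c i) (c i') := by
  induction i', h using Nat.le_induction with
  | base => exact .refl
  | succ n hn ih =>
    exact .tail (ih fun m h1 h2 => hF m h1 (by omega)) ⟨.inl (hR n), hF n hn (by omega)⟩

/-- `n` edges on `V` serve all pairs in `P`, given the consecutive edges of both chains. -/
def Srv (V : Set ℂ) (a b : ℕ → ℂ) (n : ℕ) (P : ℕ → ℕ → Prop) : Prop :=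
  ∃ T : Finset (ℂ × ℂ), (∀ e ∈ T, e.1 ∈ V ∧ e.2 ∈ V) ∧ T.card ≤ n ∧
    ∀ R : Set (ℂ × ℂ), (T : Set (ℂ × ℂ)) ⊆ R → (∀ i, (a i, a (i + 1)) ∈ R) →
      (∀ i, (b i, b (i + 1)) ∈ R) → ∀ i j, P i j → Cn R (a i) (b j)

theorem Srv.union {V a b n m P Q} (h : Srv V a b n P) (h' : Srv V a b m Q) :
    Srv V a b (n + m) (fun i j => P i j ∨ Q i j) := by
  classical
  obtain ⟨T, h1, h2, h3⟩ := h
  obtain ⟨T', h1', h2', h3'⟩ := h'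
  refine ⟨T ∪ T', ?_, ?_, ?_⟩
  · intro e he
    rcases Finset.mem_union.1 he with he | he
    · exact h1 e he
    · exact h1' e he
  · exact (Finset.card_union_le _ _).trans (by omega)
  · intro R hR ha hb i j hij
    rw [Finset.coe_union, Set.union_subset_iff] at hR
    rcases hij with hij | hij
    · exact h3 R hR.1 ha hb i j hij
    · exact h3' R hR.2 ha hb i j hij

theorem Srv.mono {V a b n m} {P Q : ℕ → ℕ → Prop} (h : Srv V a b n P) (hn : n ≤ m)
    (hP : ∀ i j, Q i j → P i j) : Srv V a b m Q := by
  obtain ⟨T, h1, h2, h3⟩ := h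
  exact ⟨T, h1, h2.trans hn, fun R hR ha hb i j hij => h3 R hR ha hb i j (hP i j hij)⟩

theorem Srv.swap {V a b n} {P : ℕ → ℕ → Prop} (h : Srv V a b n P) :
    Srv V b a n (fun i j => P j i) := by
  obtain ⟨T, h1, h2, h3⟩ := h
  exact ⟨T, h1, h2, fun R hR ha hb i j hij => (h3 R hR hb ha j i hij).symm⟩

theorem Srv.rot {V : Set ℂ} {a b : ℕ → ℂ} {n} {P : ℕ → ℕ → Prop}
    (h : Srv {z | -Complex.I * z ∈ V} (fun i => Complex.I * a i) (fun i => Complex.I * b i) n P) :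
    Srv V a b n P := by
  classical
  obtain ⟨T, h1, h2, h3⟩ := h
  have hI : ∀ z : ℂ, -Complex.I * (Complex.I * z) = z := fun z => by
    rw [← mul_assoc]; simp
  refine ⟨T.image fun e => (-Complex.I * e.1, -Complex.I * e.2), ?_, Finset.card_image_le.trans h2, ?_⟩
  · intro e he
    obtain ⟨e', he', rfl⟩ := Finset.mem_image.1 he
    exact h1 e' he'
  · intro R hR ha hb i j hij
    obtain ⟨u, hu, h⟩ := h3 {e | (-Complex.I * e.1, -Complex.I * e.2) ∈ R} (by
      intro e he
      exact hR (Finset.mem_coe.2 (Finset.mem_image_of_mem _ (Finset.mem_coe.1 he)))) (by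
      intro i; simpa only [Set.mem_ofPred_eq, hI] using ha i) (by
      intro i; simpa only [Set.mem_ofPred_eq, hI] using hb i) i j hij
    refine ⟨-Complex.I * u, by simp [hu], ?_⟩
    have := Relation.ReflTransGen.lift (p := St R (-Complex.I * u)) (fun z => -Complex.I * z) ?_ _ _ h
    · simpa only [Function.onFun, hI] using this
    · intro x y hxy
      obtain ⟨h1, h2, h3⟩ := hxy
      refine ⟨h1, ?_, ?_⟩
      · simp at h2 h3 ⊢; linarith
      · simp at h2 h3 ⊢; linarith

theorem hubMin {V : Set ℂ} {a b : ℕ → ℂ} (ha : ∀ i, a i ∈ V) (hb : ∀ i, b i ∈ V) (u : ℂ) (hu : u ≠ 0)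
    (i0 s j0 t : ℕ) (hF : ∀ m, i0 ≤ m → m + 1 < i0 + s → F u (a (m + 1) - a m)) :
    Srv V a b t (fun i j => (i0 ≤ i ∧ i < i0 + s) ∧ (j0 ≤ j ∧ j < j0 + t) ∧ F u (a i - b j)) := by
  classical
  have hf : ∀ j, ∃ f, ∀ i, ((i0 ≤ i ∧ i < i0 + s) ∧ F u (a i - b j)) →
      ((i0 ≤ f ∧ f < i0 + s) ∧ F u (a f - b j)) ∧ f ≤ i := by
    intro j
    by_cases h : ∃ i, ((i0 ≤ i ∧ i < i0 + s) ∧ F u (a i - b j))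
    · exact ⟨Nat.find h, fun i hi => ⟨Nat.find_spec h, Nat.find_min' h hi⟩⟩
    · exact ⟨0, fun i hi => absurd ⟨i, hi⟩ h⟩
  choose f hf using hf
  refine ⟨(Finset.Ico j0 (j0 + t)).image fun j => (a (f j), b j), ?_, ?_, ?_⟩
  · intro e he
    obtain ⟨j, _, rfl⟩ := Finset.mem_image.1 he
    exact ⟨ha _, hb _⟩
  · exact Finset.card_image_le.trans (by simp)
  · intro R hR haR hbR i j ⟨hi, hj, hij⟩
    obtain ⟨⟨h1, h2⟩, h3⟩ := hf j i ⟨hi, hij⟩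
    refine Cn.symm ⟨u, hu, .head (b := a (f j)) ⟨.inr (hR ?_), h2⟩ (walk haR h3 ?_)⟩
    · exact Finset.mem_coe.2 (Finset.mem_image.2 ⟨j, by simpa using hj, rfl⟩)
    · intro m hm hm'
      exact hF m (by omega) (by omega)

theorem hubMax {V : Set ℂ} {a b : ℕ → ℂ} (ha : ∀ i, a i ∈ V) (hb : ∀ i, b i ∈ V) (u : ℂ) (hu : u ≠ 0)
    (i0 s j0 t : ℕ) (hF : ∀ m, i0 ≤ m → m + 1 < i0 + s → F u (a (m + 1) - a m)) :
    Srv V a b t (fun i j => (i0 ≤ i ∧ i < i0 + s) ∧ (j0 ≤ j ∧ j < j0 + t) ∧ F u (b j - a i)) := by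
  classical
  have hf : ∀ j, ∃ f, ∀ i, ((i0 ≤ i ∧ i < i0 + s) ∧ F u (b j - a i)) →
      ((i0 ≤ f ∧ f < i0 + s) ∧ F u (b j - a f)) ∧ i ≤ f := by
    intro j
    by_cases h : ∃ i, ((i0 ≤ i ∧ i < i0 + s) ∧ F u (b j - a i))
    · obtain ⟨i1, hi1⟩ := h
      let P : ℕ → Prop := fun i => ((i0 ≤ i ∧ i < i0 + s) ∧ F u (b j - a i))
      exact ⟨Nat.findGreatest P (i0 + s), fun i hi =>
        ⟨Nat.findGreatest_spec (P := P) (m := i1) (by omega) hi1,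
          Nat.le_findGreatest (by omega) hi⟩⟩
    · exact ⟨0, fun i hi => absurd ⟨i, hi⟩ h⟩
  choose f hf using hf
  refine ⟨(Finset.Ico j0 (j0 + t)).image fun j => (a (f j), b j), ?_, ?_, ?_⟩
  · intro e he
    obtain ⟨j, _, rfl⟩ := Finset.mem_image.1 he
    exact ⟨ha _, hb _⟩
  · exact Finset.card_image_le.trans (by simp)
  · intro R hR haR hbR i j ⟨hi, hj, hij⟩
    obtain ⟨⟨h1, h2⟩, h3⟩ := hf j i ⟨hi, hij⟩
    refine ⟨u, hu, .tail (b := a (f j)) (walk haR h3 ?_) ⟨.inl (hR ?_), h2⟩⟩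
    · intro m hm hm'
      exact hF m (by omega) (by omega)
    · exact Finset.mem_coe.2 (Finset.mem_image.2 ⟨j, by simpa using hj, rfl⟩)

/-- Increasing chains with monotone slope parameter. -/
def Edge (σ : ℝ) (v : ℂ) : Prop := ∃ l : ℝ, 0 ≤ l ∧ v.re = l * (1 - σ) ∧ v.im = l * σ

theorem Edge.low {σ θ : ℝ} {v : ℂ} (h : Edge σ v) (h0 : 0 ≤ σ) (h1 : σ ≤ 1) (t0 : 0 ≤ θ) (t1 : θ ≤ 1)
    (hs : σ ≤ θ) : F ⟨θ, -(1 - θ)⟩ v := by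
  obtain ⟨l, hl, e1, e2⟩ := h
  constructor
  · simp only [e1, e2]
    have := mul_nonneg hl (sub_nonneg.2 hs)
    nlinarith
  · simp only [e1, e2]
    have a1 := mul_nonneg hl (mul_nonneg h0 t0)
    have a2 := mul_nonneg hl (mul_nonneg (sub_nonneg.2 h1) (sub_nonneg.2 t1))
    nlinarith

theorem Edge.high {σ θ : ℝ} {v : ℂ} (h : Edge σ v) (h0 : 0 ≤ σ) (h1 : σ ≤ 1) (t0 : 0 ≤ θ) (t1 : θ ≤ 1)
    (hs : θ ≤ σ) : F ⟨1 - θ, θ⟩ v := by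
  obtain ⟨l, hl, e1, e2⟩ := h
  constructor
  · simp only [e1, e2]
    have a1 := mul_nonneg hl (mul_nonneg h0 t0)
    have a2 := mul_nonneg hl (mul_nonneg (sub_nonneg.2 h1) (sub_nonneg.2 t1))
    nlinarith
  · simp only [e1, e2]
    have := mul_nonneg hl (sub_nonneg.2 hs)
    nlinarith

theorem Edge.quad {σ : ℝ} {v : ℂ} (h : Edge σ v) (h0 : 0 ≤ σ) (h1 : σ ≤ 1) : F 1 v := by
  obtain ⟨l, hl, e1, e2⟩ := h
  constructor
  · simp only [e1, e2]
    have := mul_nonneg hl (sub_nonneg.2 h1)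
    simpa using this
  · simp only [e1, e2]
    have := mul_nonneg hl h0
    simpa using this

def Q2 (v : ℂ) : Prop := v.re ≤ 0 ∧ 0 ≤ v.im

theorem uhigh_ne (θ : ℝ) : (⟨1 - θ, θ⟩ : ℂ) ≠ 0 := by
  intro h
  have h1 := congrArg Complex.re h
  have h2 := congrArg Complex.im h
  simp at h1 h2
  linarith

theorem ulow_ne (θ : ℝ) : (⟨θ, -(1 - θ)⟩ : ℂ) ≠ 0 := by
  intro h
  have h1 := congrArg Complex.re h
  have h2 := congrArg Complex.im h
  simp at h1 h2
  linarith

theorem Q2.cases {v : ℂ} {θ : ℝ} (h : Q2 v) (t0 : 0 ≤ θ) (t1 : θ ≤ 1) :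
    F ⟨1 - θ, θ⟩ v ∨ F ⟨θ, -(1 - θ)⟩ (-v) := by
  obtain ⟨h1, h2⟩ := h
  have a1 := mul_nonneg (neg_nonneg.2 h1) t0
  have a2 := mul_nonneg h2 (sub_nonneg.2 t1)
  rcases le_total 0 (v.re * (1 - θ) + v.im * θ) with h | h
  · left
    constructor
    · exact h
    · simp only; nlinarith
  · right
    constructor
    · simp only [Complex.neg_re, Complex.neg_im]; nlinarith
    · simp only [Complex.neg_re, Complex.neg_im]; nlinarith

section two
variable {V : Set ℂ} {a b : ℕ → ℂ} {σ τ : ℕ → ℝ} {θ : ℝ}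

theorem lin1 (ha : ∀ i, a i ∈ V) (hb : ∀ i, b i ∈ V)
    (hσ : ∀ i, 0 ≤ σ i ∧ σ i ≤ 1) (hτ : ∀ i, 0 ≤ τ i ∧ τ i ≤ 1)
    (ea : ∀ i, Edge (σ i) (a (i + 1) - a i)) (eb : ∀ i, Edge (τ i) (b (i + 1) - b i))
    (t0 : 0 ≤ θ) (t1 : θ ≤ 1) (i0 s j0 t : ℕ)
    (h1 : ∀ m, i0 ≤ m → m + 1 < i0 + s → σ m ≤ θ) (h2 : ∀ m, j0 ≤ m → m + 1 < j0 + t → θ ≤ τ m) :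
    Srv V a b (s + t)
      (fun i j => (i0 ≤ i ∧ i < i0 + s) ∧ (j0 ≤ j ∧ j < j0 + t) ∧ Q2 (b j - a i)) := by
  have A := hubMin ha hb _ (ulow_ne θ) i0 s j0 t
    fun m hm hm' => (ea m).low (hσ m).1 (hσ m).2 t0 t1 (h1 m hm hm')
  have B := (hubMin hb ha _ (uhigh_ne θ) j0 t i0 s
    fun m hm hm' => (eb m).high (hτ m).1 (hτ m).2 t0 t1 (h2 m hm hm')).swap
  refine (A.union B).mono (by omega) ?_
  rintro i j ⟨hi, hj, hq⟩
  rcases hq.cases t0 t1 with h | h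
  · exact .inr ⟨hj, hi, h⟩
  · exact .inl ⟨hi, hj, by rwa [neg_sub (b j) (a i)] at h⟩

theorem lin2 (ha : ∀ i, a i ∈ V) (hb : ∀ i, b i ∈ V)
    (hσ : ∀ i, 0 ≤ σ i ∧ σ i ≤ 1) (hτ : ∀ i, 0 ≤ τ i ∧ τ i ≤ 1)
    (ea : ∀ i, Edge (σ i) (a (i + 1) - a i)) (eb : ∀ i, Edge (τ i) (b (i + 1) - b i))
    (t0 : 0 ≤ θ) (t1 : θ ≤ 1) (i0 s j0 t : ℕ)
    (h1 : ∀ m, i0 ≤ m → m + 1 < i0 + s → θ ≤ σ m) (h2 : ∀ m, j0 ≤ m → m + 1 < j0 + t → τ m ≤ θ) :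
    Srv V a b (s + t)
      (fun i j => (i0 ≤ i ∧ i < i0 + s) ∧ (j0 ≤ j ∧ j < j0 + t) ∧ Q2 (b j - a i)) := by
  have A := hubMax ha hb _ (uhigh_ne θ) i0 s j0 t
    fun m hm hm' => (ea m).high (hσ m).1 (hσ m).2 t0 t1 (h1 m hm hm')
  have B := (hubMax hb ha _ (ulow_ne θ) j0 t i0 s
    fun m hm hm' => (eb m).low (hτ m).1 (hτ m).2 t0 t1 (h2 m hm hm')).swap
  refine (A.union B).mono (by omega) ?_
  rintro i j ⟨hi, hj, hq⟩
  rcases hq.cases t0 t1 with h | h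
  · exact .inl ⟨hi, hj, h⟩
  · exact .inr ⟨hj, hi, by rwa [neg_sub (b j) (a i)] at h⟩

/-- Split an index interval by a threshold. -/
theorem split_mono (τ : ℕ → ℝ) (hm : Monotone τ ∨ Antitone τ) (θ : ℝ) (j0 t : ℕ) :
    ∃ l lt h ht : ℕ, lt + ht = t ∧
      (∀ j, j0 ≤ j → j < j0 + t → (l ≤ j ∧ j < l + lt) ∨ (h ≤ j ∧ j < h + ht)) ∧
      (∀ m, l ≤ m → m + 1 < l + lt → τ m ≤ θ) ∧ (∀ m, h ≤ m → m + 1 < h + ht → θ ≤ τ m) := by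
  rcases hm with hm | hm
  · have : ∃ k, k ≤ t ∧ (∀ m, j0 ≤ m → m < j0 + k → τ m ≤ θ) ∧
        (∀ m, j0 + k ≤ m → m < j0 + t → θ ≤ τ m) := by
      induction t with
      | zero => exact ⟨0, le_rfl, fun m _ _ => by omega, fun m _ _ => by omega⟩
      | succ t ih =>
        obtain ⟨k, hk, h1, h2⟩ := ih
        rcases le_total θ (τ (j0 + t)) with h | h
        · refine ⟨k, by omega, h1, fun m hm1 hm2 => ?_⟩
          rcases Nat.lt_or_ge m (j0 + t) with h' | h'
          · exact h2 m hm1 h'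
          · exact h.trans (hm h')
        · exact ⟨t + 1, le_rfl, fun m hm1 hm2 => (hm (by omega)).trans h, fun m _ _ => by omega⟩
    obtain ⟨k, hk, h1, h2⟩ := this
    exact ⟨j0, k, j0 + k, t - k, by omega, fun j _ _ => by omega, fun m _ _ => h1 m (by omega) (by omega),
      fun m _ _ => h2 m (by omega) (by omega)⟩
  · have : ∃ k, k ≤ t ∧ (∀ m, j0 ≤ m → m < j0 + k → θ ≤ τ m) ∧
        (∀ m, j0 + k ≤ m → m < j0 + t → τ m ≤ θ) := by
      induction t with
      | zero => exact ⟨0, le_rfl, fun m _ _ => by omega, fun m _ _ => by omega⟩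
      | succ t ih =>
        obtain ⟨k, hk, h1, h2⟩ := ih
        rcases le_total (τ (j0 + t)) θ with h | h
        · refine ⟨k, by omega, h1, fun m hm1 hm2 => ?_⟩
          rcases Nat.lt_or_ge m (j0 + t) with h' | h'
          · exact h2 m hm1 h'
          · exact (hm h').trans h
        · exact ⟨t + 1, le_rfl, fun m hm1 hm2 => h.trans (hm (by omega)), fun m _ _ => by omega⟩
    obtain ⟨k, hk, h1, h2⟩ := this
    exact ⟨j0 + k, t - k, j0, k, by omega, fun j _ _ => by omega, fun m _ _ => h2 m (by omega) (by omega),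
      fun m _ _ => h1 m (by omega) (by omega)⟩

/-- Split at the middle. -/
theorem split_mid (σ : ℕ → ℝ) (hm : Monotone σ ∨ Antitone σ) (i0 s d : ℕ) (hs : s ≤ 2 ^ (d + 1)) :
    ∃ m l ls h hs : ℕ, ls + hs = s ∧ ls ≤ 2 ^ d ∧ hs ≤ 2 ^ d ∧
      (∀ j, i0 ≤ j → j < i0 + s → (l ≤ j ∧ j < l + ls) ∨ (h ≤ j ∧ j < h + hs)) ∧
      (∀ k, l ≤ k → k + 1 < l + ls → σ k ≤ σ m) ∧ (∀ k, h ≤ k → k + 1 < h + hs → σ m ≤ σ k) := by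
  rw [pow_succ] at hs
  rcases hm with hm | hm
  · exact ⟨i0 + s / 2 - 1, i0, s / 2, i0 + s / 2, s - s / 2, by omega, by omega, by omega,
      fun j _ _ => by omega, fun k _ _ => hm (by omega), fun k _ _ => hm (by omega)⟩
  · exact ⟨i0 + s / 2 - 1, i0 + s / 2, s - s / 2, i0, s / 2, by omega, by omega, by omega,
      fun j _ _ => by omega, fun k _ _ => hm (by omega), fun k _ _ => hm (by omega)⟩

theorem dc (ha : ∀ i, a i ∈ V) (hb : ∀ i, b i ∈ V)
    (hσ : ∀ i, 0 ≤ σ i ∧ σ i ≤ 1) (hτ : ∀ i, 0 ≤ τ i ∧ τ i ≤ 1)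
    (ea : ∀ i, Edge (σ i) (a (i + 1) - a i)) (eb : ∀ i, Edge (τ i) (b (i + 1) - b i))
    (ma : Monotone σ ∨ Antitone σ) (mb : Monotone τ ∨ Antitone τ) (d : ℕ) :
    ∀ i0 s j0 t : ℕ, s ≤ 2 ^ d → Srv V a b ((s + t) * (d + 1))
      (fun i j => (i0 ≤ i ∧ i < i0 + s) ∧ (j0 ≤ j ∧ j < j0 + t) ∧ Q2 (b j - a i)) := by
  classical
  induction d with
  | zero =>
    intro i0 s j0 t hs
    refine ⟨(Finset.Ico j0 (j0 + t)).image fun j => (a i0, b j), ?_, ?_, ?_⟩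
    · intro e he
      obtain ⟨j, _, rfl⟩ := Finset.mem_image.1 he
      exact ⟨ha _, hb _⟩
    · exact Finset.card_image_le.trans (by simp)
    · rintro R hR haR hbR i j ⟨hi, hj, h1, h2⟩
      have : i = i0 := by simp at hs; omega
      subst this
      refine ⟨Complex.I, Complex.I_ne_zero, .single ⟨.inl (hR ?_), ?_⟩⟩
      · exact Finset.mem_coe.2 (Finset.mem_image.2 ⟨j, by simpa using hj, rfl⟩)
      · constructor
        · simpa using h2
        · simpa using h1
  | succ d ih =>
    intro i0 s j0 t hs
    obtain ⟨m, l, ls, h, hs', e1, b1, b2, c1, c2, c3⟩ := split_mid σ ma i0 s d hs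
    obtain ⟨l', lt, h', ht, e2, c4, c5, c6⟩ := split_mono τ mb (σ m) j0 t
    have A1 := lin1 ha hb hσ hτ ea eb (hσ m).1 (hσ m).2 l ls h' ht c2 c6
    have A2 := lin2 ha hb hσ hτ ea eb (hσ m).1 (hσ m).2 h hs' l' lt c3 c5
    have A3 := ih l ls l' lt b1
    have A4 := ih h hs' h' ht b2
    refine (((A1.union A2).union A3).union A4).mono ?_ ?_
    · subst e1 e2; apply le_of_eq; ring
    · rintro i j ⟨hi, hj, hq⟩
      rcases c1 i hi.1 hi.2 with hi' | hi' <;> rcases c4 j hj.1 hj.2 with hj' | hj'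
      · exact .inl (.inr ⟨hi', hj', hq⟩)
      · exact .inl (.inl (.inl ⟨hi', hj', hq⟩))
      · exact .inl (.inl (.inr ⟨hi', hj', hq⟩))
      · exact .inr ⟨hi', hj', hq⟩

end two

def Good (a : ℕ → ℂ) : Prop := ∃ σ : ℕ → ℝ, (∀ i, 0 ≤ σ i ∧ σ i ≤ 1) ∧ (Monotone σ ∨ Antitone σ) ∧
  ∀ i, Edge (σ i) (a (i + 1) - a i)

theorem F_one {v : ℂ} : F 1 v ↔ 0 ≤ v.re ∧ 0 ≤ v.im := by simp [F]

theorem F_negI {v : ℂ} : F (-Complex.I) v ↔ v.im ≤ 0 ∧ 0 ≤ v.re := by simp [F]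

theorem inc_inc {V : Set ℂ} {a b : ℕ → ℂ} (ha : ∀ i, a i ∈ V) (hb : ∀ i, b i ∈ V)
    (ga : Good a) (gb : Good b) (k d : ℕ) (hk : k ≤ 2 ^ d) :
    Srv V a b (6 * k * (d + 1)) (fun i j => i < k ∧ j < k) := by
  obtain ⟨σ, hσ, ma, ea⟩ := ga
  obtain ⟨τ, hτ, mb, eb⟩ := gb
  have A1 := dc ha hb hσ hτ ea eb ma mb d 0 k 0 k hk
  have A2 := (dc hb ha hτ hσ eb ea mb ma d 0 k 0 k hk).swap
  have A3 := hubMin ha hb 1 one_ne_zero 0 k 0 k fun m _ _ => (ea m).quad (hσ m).1 (hσ m).2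
  have A4 := hubMax ha hb 1 one_ne_zero 0 k 0 k fun m _ _ => (ea m).quad (hσ m).1 (hσ m).2
  refine (((A1.union A2).union A3).union A4).mono (by nlinarith [Nat.zero_le (k * d)]) ?_
  rintro i j ⟨hi, hj⟩
  simp only [zero_le, true_and, zero_add, hi, hj, F_one, Q2, Complex.sub_re, Complex.sub_im, sub_nonneg,
    sub_nonpos]
  rcases le_total (a i).re (b j).re with h1 | h1 <;> rcases le_total (a i).im (b j).im with h2 | h2 <;>
    simp [h1, h2]

theorem inc_dec {V : Set ℂ} {a b : ℕ → ℂ} (ha : ∀ i, a i ∈ V) (hb : ∀ i, b i ∈ V)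
    (ga : Good a) (gb : Good (fun i => Complex.I * b i)) (k d : ℕ) :
    Srv V a b (6 * k * (d + 1)) (fun i j => i < k ∧ j < k) := by
  obtain ⟨σ, hσ, ma, ea⟩ := ga
  obtain ⟨τ, hτ, mb, eb⟩ := gb
  have hbF : ∀ m, F (-Complex.I) (b (m + 1) - b m) := by
    intro m
    have := (eb m).quad (hτ m).1 (hτ m).2
    rw [F_one] at this
    rw [F_negI]
    simpa using this
  have A1 := (hubMin hb ha (-Complex.I) (by simp) 0 k 0 k fun m _ _ => hbF m).swap
  have A2 := (hubMax hb ha (-Complex.I) (by simp) 0 k 0 k fun m _ _ => hbF m).swap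
  have A3 := hubMin ha hb 1 one_ne_zero 0 k 0 k fun m _ _ => (ea m).quad (hσ m).1 (hσ m).2
  have A4 := hubMax ha hb 1 one_ne_zero 0 k 0 k fun m _ _ => (ea m).quad (hσ m).1 (hσ m).2
  refine (((A1.union A2).union A3).union A4).mono (by nlinarith [Nat.zero_le (k * d)]) ?_
  rintro i j ⟨hi, hj⟩
  simp only [zero_le, true_and, zero_add, hi, hj, F_one, F_negI, Complex.sub_re, Complex.sub_im, sub_nonneg,
    sub_nonpos]
  rcases le_total (a i).re (b j).re with h1 | h1 <;> rcases le_total (a i).im (b j).im with h2 | h2 <;>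
    simp [h1, h2]

def Gd (a : ℕ → ℂ) : Prop := Good a ∨ Good (fun i => Complex.I * a i)

theorem pair {V : Set ℂ} {a b : ℕ → ℂ} (ha : ∀ i, a i ∈ V) (hb : ∀ i, b i ∈ V)
    (ga : Gd a) (gb : Gd b) (k d : ℕ) (hk : k ≤ 2 ^ d) :
    Srv V a b (6 * k * (d + 1)) (fun i j => i < k ∧ j < k) := by
  rcases ga with ga | ga <;> rcases gb with gb | gb
  · exact inc_inc ha hb ga gb k d hk
  · exact inc_dec ha hb ga gb k d
  · exact (inc_dec hb ha gb ga k d).swap.mono le_rfl fun i j h => h.symm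
  · have hI : ∀ z : ℂ, -Complex.I * (Complex.I * z) = z := fun z => by
      rw [← mul_assoc]; simp
    exact Srv.rot (inc_inc (fun i => by simpa only [Set.mem_ofPred_eq, hI] using ha i)
      (fun i => by simpa only [Set.mem_ofPred_eq, hI] using hb i) ga gb k d hk)

end AM

namespace AM

/-! ### Cups and caps, in abstract form -/

/-- A chain with `k` edges inside `X` with the consecutive labels related by `r`. -/
def Up (φ : ℕ → ℕ → ℝ) (r : ℝ → ℝ → Prop) (X : Finset ℕ) (k : ℕ) (c : ℕ → ℕ) : Prop :=
  (∀ i ≤ k, c i ∈ X) ∧ (∀ i < k, c i < c (i + 1)) ∧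
    ∀ i, i + 1 < k → r (φ (c i) (c (i + 1))) (φ (c (i + 1)) (c (i + 2)))

theorem Up.mono {φ r X Y k c} (h : Up φ r X k c) (hXY : X ⊆ Y) : Up φ r Y k c :=
  ⟨fun i hi => hXY (h.1 i hi), h.2⟩

theorem Up.zero {φ r} {X : Finset ℕ} {x : ℕ} (hx : x ∈ X) : Up φ r X 0 (fun _ => x) :=
  ⟨fun _ _ => hx, fun _ h => absurd h (by omega), fun _ h => absurd h (by omega)⟩

theorem Up.append {φ r X k c z} (h : Up φ r X (k + 1) c) (hz : z ∈ X) (hlt : c (k + 1) < z)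
    (hr : r (φ (c k) (c (k + 1))) (φ (c (k + 1)) z)) :
    Up φ r X (k + 2) (fun i => if i ≤ k + 1 then c i else z) := by
  refine ⟨fun i hi => ?_, fun i hi => ?_, fun i hi => ?_⟩
  · dsimp only
    split_ifs with h1
    · exact h.1 i h1
    · exact hz
  · dsimp only
    rcases Nat.lt_or_ge i (k + 1) with h1 | h1
    · rw [if_pos (by omega), if_pos (by omega)]; exact h.2.1 i h1
    · have : i = k + 1 := by omega
      subst this
      simpa using hlt
  · dsimp only
    rcases Nat.lt_or_ge i k with h1 | h1
    · rw [if_pos (by omega), if_pos (by omega), if_pos (by omega)]; exact h.2.2 i (by omega)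
    · have : i = k := by omega
      subst this
      simpa using hr

theorem Up.prepend {φ r X k c z} (h : Up φ r X (k + 1) c) (hz : z ∈ X) (hlt : z < c 0)
    (hr : r (φ z (c 0)) (φ (c 0) (c 1))) :
    Up φ r X (k + 2) (fun i => Nat.casesOn i z c) := by
  refine ⟨fun i hi => ?_, fun i hi => ?_, fun i hi => ?_⟩
  · cases i with
    | zero => exact hz
    | succ i => exact h.1 i (by omega)
  · cases i with
    | zero => exact hlt
    | succ i => exact h.2.1 i (by omega)
  · cases i with
    | zero => exact hr
    | succ i => exact h.2.2 i (by omega)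

theorem Up.one {φ r} {X : Finset ℕ} (hX : 2 ≤ X.card) : ∃ c, Up φ r X 1 c := by
  obtain ⟨x, hx, y, hy, hxy⟩ := Finset.one_lt_card.1 (show 1 < X.card by omega)
  wlog h : x < y generalizing x y
  · exact this y hy x hx hxy.symm (by omega)
  refine ⟨fun i => if i = 0 then x else y, fun i _ => ?_, fun i hi => ?_, fun i hi => absurd hi (by omega)⟩
  · dsimp only
    split_ifs <;> assumption
  · have : i = 0 := by omega
    subst this
    simpa using h

theorem cups_caps (φ : ℕ → ℕ → ℝ) (n : ℕ) : ∀ (k l : ℕ) (X : Finset ℕ), k + l = n → 2 ^ (k + l) ≤ X.card →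
    (∃ c, Up φ (· ≤ ·) X k c) ∨ (∃ c, Up φ (· ≥ ·) X l c) := by
  classical
  induction n with
  | zero =>
    intro k l X hkl hX
    have hk : k = 0 := by omega
    subst hk
    obtain ⟨x, hx⟩ := Finset.card_pos.1 (lt_of_lt_of_le (by positivity) hX)
    exact .inl ⟨_, Up.zero hx⟩
  | succ n ih =>
    intro k l X hkl hX
    have hX0 : 0 < X.card := lt_of_lt_of_le (by positivity) hX
    have hX2 : 2 ≤ X.card := by
      rw [hkl, pow_succ] at hX
      have : 0 < 2 ^ n := by positivity
      omega
    obtain ⟨x, hx⟩ := Finset.card_pos.1 hX0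
    rcases k with _ | _ | k
    · exact .inl ⟨_, Up.zero hx⟩
    · exact .inl (Up.one hX2)
    rcases l with _ | _ | l
    · exact .inr ⟨_, Up.zero hx⟩
    · exact .inr (Up.one hX2)
    let L := X.filter fun q => ∃ c, Up φ (· ≤ ·) X (k + 1) c ∧ c (k + 1) = q
    have hcard : L.card + (X \ L).card = X.card := by
      rw [add_comm]; exact Finset.card_sdiff_add_card_eq_card (Finset.filter_subset _ _)
    have hp : 2 ^ (k + 1 + 1 + (l + 1 + 1)) = 2 * 2 ^ n := by
      rw [hkl, pow_succ, mul_comm]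
    rcases Nat.lt_or_ge (X \ L).card (2 ^ n) with h | h
    · have hL : 2 ^ n ≤ L.card := by omega
      have e : k + 1 + 1 + (l + 1) = n := by omega
      rcases ih (k + 1 + 1) (l + 1) L e (by rw [e]; exact hL) with ⟨c, hc⟩ | ⟨c, hc⟩
      · exact .inl ⟨c, hc.mono (Finset.filter_subset _ _)⟩
      · obtain ⟨hq, c', hc', hcq⟩ := Finset.mem_filter.1 (hc.1 0 (by omega))
        have hc := hc.mono (Finset.filter_subset _ _)
        rcases le_total (φ (c' k) (c' (k + 1))) (φ (c 0) (c 1)) with h' | h'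
        · left
          refine ⟨_, hc'.append (hc.1 1 (by omega)) ?_ ?_⟩
          · rw [hcq]; exact hc.2.1 0 (by omega)
          · rw [hcq] at h' ⊢; exact h'
        · right
          refine ⟨_, hc.prepend (hc'.1 k (by omega)) ?_ ?_⟩
          · rw [← hcq]; exact hc'.2.1 k (by omega)
          · rw [hcq] at h'; exact h'
    · have e : k + 1 + (l + 1 + 1) = n := by omega
      rcases ih (k + 1) (l + 1 + 1) (X \ L) e (by rw [e]; exact h) with ⟨c, hc⟩ | ⟨c, hc⟩
      · exfalso
        have h1 := hc.1 (k + 1) le_rfl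
        rw [Finset.mem_sdiff] at h1
        exact h1.2 (Finset.mem_filter.2 ⟨h1.1, c, hc.mono Finset.sdiff_subset, rfl⟩)
      · exact .inr ⟨c, hc.mono Finset.sdiff_subset⟩

/-! ### Extraction of chains -/

/-- slope label of a vector -/
def sl (v : ℂ) : ℝ := v.im / (v.re + |v.im|)

theorem sl_le {v : ℂ} (h : 0 ≤ v.re) : sl v ≤ 1 :=
  div_le_one_of_le₀ (by linarith [le_abs_self v.im]) (by positivity)

theorem neg_le_sl {v : ℂ} (h : 0 ≤ v.re) : -1 ≤ sl v := by
  unfold sl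
  rcases (show 0 ≤ v.re + |v.im| by positivity).eq_or_lt with h0 | h0
  · rw [← h0]; norm_num
  · rw [le_div_iff₀ h0]; linarith [neg_abs_le v.im]

theorem edge_inc {v : ℂ} (h : 0 ≤ v.re) (hs : 0 ≤ sl v) : Edge (sl v) v := by
  refine ⟨v.re + |v.im|, by positivity, ?_⟩
  rcases (show 0 ≤ v.re + |v.im| by positivity).eq_or_lt with h0 | h0
  · have := abs_nonneg v.im
    have h1 : v.re = 0 := by linarith
    have h2 : v.im = 0 := abs_eq_zero.1 (by linarith)
    simp [h1, h2]
  · have e : (v.re + |v.im|) * sl v = v.im := by unfold sl; field_simp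
    have : 0 ≤ v.im := by rw [← e]; positivity
    rw [mul_sub, e, abs_of_nonneg this]
    simp

theorem edge_dec {v : ℂ} (h : 0 ≤ v.re) (hs : sl v ≤ 0) : Edge (1 + sl v) (Complex.I * v) := by
  refine ⟨v.re + |v.im|, by positivity, ?_⟩
  rcases (show 0 ≤ v.re + |v.im| by positivity).eq_or_lt with h0 | h0
  · have := abs_nonneg v.im
    have h1 : v.re = 0 := by linarith
    have h2 : v.im = 0 := abs_eq_zero.1 (by linarith)
    simp [h1, h2]
  · have e : (v.re + |v.im|) * sl v = v.im := by unfold sl; field_simp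
    have : v.im ≤ 0 := by rw [← e]; exact mul_nonpos_of_nonneg_of_nonpos h0.le hs
    rw [mul_sub, mul_add, e, abs_of_nonpos this]
    simp

theorem edge_zero (σ : ℝ) : Edge σ 0 := ⟨0, le_rfl, by simp, by simp⟩

/-- From a stretch of a chain to a good sequence. -/
theorem good_of_stretch (s : ℕ → ℂ) (hs : Monotone fun i => (s i).re) (c : ℕ → ℕ) (k o : ℕ)
    (hc : ∀ i ≤ k, c (o + i) ≤ c (o + i + 1))
    (hm : (∀ i j, i ≤ j → j ≤ k → sl (s (c (o + i + 1)) - s (c (o + i))) ≤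
        sl (s (c (o + j + 1)) - s (c (o + j)))) ∨
      (∀ i j, i ≤ j → j ≤ k → sl (s (c (o + j + 1)) - s (c (o + j))) ≤
        sl (s (c (o + i + 1)) - s (c (o + i)))))
    (hsg : (∀ i ≤ k, 0 ≤ sl (s (c (o + i + 1)) - s (c (o + i)))) ∨
      (∀ i ≤ k, sl (s (c (o + i + 1)) - s (c (o + i))) ≤ 0)) :
    Gd (fun i => s (c (o + min i k))) := by
  have hre : ∀ i ≤ k, 0 ≤ (s (c (o + i + 1)) - s (c (o + i))).re := by
    intro i hi
    rw [Complex.sub_re, sub_nonneg]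
    exact hs (hc i hi)
  have hmon : Monotone (fun i => sl (s (c (o + min i k + 1)) - s (c (o + min i k)))) ∨
      Antitone (fun i => sl (s (c (o + min i k + 1)) - s (c (o + min i k)))) := by
    rcases hm with hm | hm
    · exact .inl fun i j hij => hm _ _ (by omega) (by omega)
    · exact .inr fun i j hij => hm _ _ (by omega) (by omega)
  rcases hsg with hsg | hsg
  · left
    refine ⟨fun i => sl (s (c (o + min i k + 1)) - s (c (o + min i k))), fun i => ?_, hmon, fun i => ?_⟩
    · exact ⟨hsg _ (by omega), sl_le (hre _ (by omega))⟩
    · dsimp only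
      rcases Nat.lt_or_ge i k with h | h
      · rw [min_eq_left h.le, min_eq_left (by omega : i + 1 ≤ k)]
        exact edge_inc (hre i h.le) (hsg i h.le)
      · rw [min_eq_right h, min_eq_right (by omega : k ≤ i + 1), sub_self (s (c (o + k)))]
        exact edge_zero _
  · right
    refine ⟨fun i => 1 + sl (s (c (o + min i k + 1)) - s (c (o + min i k))), fun i => ?_, ?_, fun i => ?_⟩
    · exact ⟨by linarith [neg_le_sl (hre (min i k) (by omega))], by linarith [hsg (min i k) (by omega)]⟩
    · rcases hmon with h | h
      · exact .inl fun i j hij => by have := h hij; dsimp only at *; linarith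
      · exact .inr fun i j hij => by have := h hij; dsimp only at *; linarith
    · dsimp only
      rw [← mul_sub]
      rcases Nat.lt_or_ge i k with h | h
      · rw [min_eq_left h.le, min_eq_left (by omega : i + 1 ≤ k)]
        exact edge_dec (hre i h.le) (hsg i h.le)
      · rw [min_eq_right h, min_eq_right (by omega : k ≤ i + 1), sub_self (s (c (o + k))), mul_zero]
        exact edge_zero _

/-- Extraction: a big index set contains `k+1` indices giving a good chain. -/
theorem extract (s : ℕ → ℂ) (hs : Monotone fun i => (s i).re) (k : ℕ) (X : Finset ℕ)
    (hX : 2 ^ (4 * (k + 1)) ≤ X.card) :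
    ∃ g : ℕ → ℕ, (∀ i, g i ∈ X) ∧ (∀ i j, i < j → j ≤ k → g i < g j) ∧ (∀ i, k ≤ i → g i = g k) ∧
      Gd (fun i => s (g i)) := by
  have key : ∀ c : ℕ → ℕ, ∀ o, o ≤ k + 1 → (∀ i ≤ 2 * (k + 1), c i ∈ X) →
      (∀ i < 2 * (k + 1), c i < c (i + 1)) → Gd (fun i => s (c (o + min i k))) →
      ∃ g : ℕ → ℕ, (∀ i, g i ∈ X) ∧ (∀ i j, i < j → j ≤ k → g i < g j) ∧ (∀ i, k ≤ i → g i = g k) ∧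
      Gd (fun i => s (g i)) := by
    intro c o ho h1 h2 h3
    refine ⟨fun i => c (o + min i k), fun i => h1 _ (by omega), fun i j hij hj => ?_, fun i hi => ?_, h3⟩
    · dsimp only
      rw [min_eq_left (by omega : i ≤ k), min_eq_left hj]
      induction j, hij using Nat.le_induction with
      | base => exact h2 (o + i) (by omega)
      | succ n hn ih => exact (ih (by omega)).trans (h2 (o + n) (by omega))
    · dsimp only
      rw [min_eq_right hi, min_self]
  have mono : ∀ (f : ℕ → ℝ) (n : ℕ), (∀ i, i + 1 < n → f i ≤ f (i + 1)) → ∀ i j, i ≤ j → j < n → f i ≤ f j := by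
    intro f n hf i j hij hj
    induction j, hij using Nat.le_induction with
    | base => exact le_rfl
    | succ m hm ih => exact (ih (by omega)).trans (hf m hj)
  have e : 2 * (k + 1) + 2 * (k + 1) = 4 * (k + 1) := by ring
  rcases cups_caps (fun i j => sl (s j - s i)) _ (2 * (k + 1)) (2 * (k + 1)) X rfl (by rw [e]; exact hX) with
    ⟨c, h1, h2, h3⟩ | ⟨c, h1, h2, h3⟩
  · have hm := mono (fun i => sl (s (c (i + 1)) - s (c i))) (2 * (k + 1)) h3
    rcases le_total 0 (sl (s (c (k + 1)) - s (c k))) with h | h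
    · refine key c k (by omega) h1 h2 (good_of_stretch s hs c k k (fun i hi => (h2 _ (by omega)).le)
        (.inl fun i j hij hj => hm _ _ (by omega) (by omega)) (.inl fun i hi => ?_))
      exact h.trans (hm k (k + i) (by omega) (by omega))
    · refine key c 0 (by omega) h1 h2 (good_of_stretch s hs c k 0 (fun i hi => (h2 _ (by omega)).le)
        (.inl fun i j hij hj => hm _ _ (by omega) (by omega)) (.inr fun i hi => ?_))
      exact (hm (0 + i) k (by omega) (by omega)).trans h
  · have hm := mono (fun i => -sl (s (c (i + 1)) - s (c i))) (2 * (k + 1)) (fun i hi => neg_le_neg (h3 i hi))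
    simp only [neg_le_neg_iff] at hm
    rcases le_total 0 (sl (s (c (k + 1)) - s (c k))) with h | h
    · refine key c 0 (by omega) h1 h2 (good_of_stretch s hs c k 0 (fun i hi => (h2 _ (by omega)).le)
        (.inr fun i j hij hj => hm _ _ (by omega) (by omega)) (.inl fun i hi => ?_))
      exact h.trans (hm (0 + i) k (by omega) (by omega))
    · refine key c k (by omega) h1 h2 (good_of_stretch s hs c k k (fun i hi => (h2 _ (by omega)).le)
        (.inr fun i j hij hj => hm _ _ (by omega) (by omega)) (.inr fun i hi => ?_))
      exact (hm k (k + i) (by omega) (by omega)).trans h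

/-- Partition into good chains. -/
theorem partition (s : ℕ → ℂ) (hs : Monotone fun i => (s i).re) (k : ℕ) (n : ℕ) :
    ∀ X : Finset ℕ, X.card = n → ∃ (N : ℕ) (g : ℕ → ℕ → ℕ),
      (k + 1) * N ≤ X.card + (k + 1) * 2 ^ (4 * (k + 1)) ∧
      (∀ r < N, (∀ i, g r i ∈ X) ∧ (∀ i, k ≤ i → g r i = g r k) ∧ Gd (fun i => s (g r i))) ∧
      (∀ x ∈ X, ∃ r < N, ∃ i < k + 1, g r i = x) := by
  classical
  induction n using Nat.strong_induction_on with
  | _ n ih =>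
    intro X hX
    rcases Nat.lt_or_ge X.card (2 ^ (4 * (k + 1))) with h | h
    · refine ⟨X.card, fun r _ => if h : r < X.card then (X.equivFin.symm ⟨r, h⟩ : ℕ) else 0, ?_, ?_, ?_⟩
      · have := Nat.mul_le_mul_left (k + 1) h.le
        omega
      · intro r hr
        simp only [hr, dif_pos]
        refine ⟨fun i => Subtype.prop _, fun i _ => trivial, .inl ⟨fun _ => 0, by simp, .inl monotone_const, fun i => ?_⟩⟩
        simp only [sub_self]
        exact edge_zero _
      · intro x hx
        refine ⟨X.equivFin ⟨x, hx⟩, (X.equivFin ⟨x, hx⟩).2, 0, by omega, ?_⟩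
        simp
    · obtain ⟨g, g1, g2, g3, g4⟩ := extract s hs k X h
      let C := (Finset.range (k + 1)).image g
      have hC : C.card = k + 1 := by
        rw [Finset.card_image_of_injOn, Finset.card_range]
        intro i hi j hj hij
        simp only [Finset.coe_range, Set.mem_Iio] at hi hj
        rcases lt_trichotomy i j with h | h | h
        · have := g2 i j h (by omega); omega
        · exact h
        · have := g2 j i h (by omega); omega
      have hCX : C ⊆ X := by
        intro x hx
        obtain ⟨i, _, rfl⟩ := Finset.mem_image.1 hx
        exact g1 i
      have hcard : (X \ C).card + C.card = X.card := Finset.card_sdiff_add_card_eq_card hCX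
      obtain ⟨N, g', b1, b2, b3⟩ := ih (X \ C).card (by omega) (X \ C) rfl
      refine ⟨N + 1, fun r => Nat.casesOn r g g', ?_, ?_, ?_⟩
      · rw [mul_add]; omega
      · intro r hr
        cases r with
        | zero => exact ⟨g1, g3, g4⟩
        | succ r =>
          obtain ⟨c1, c2, c3⟩ := b2 r (by omega)
          exact ⟨fun i => (Finset.mem_sdiff.1 (c1 i)).1, c2, c3⟩
      · intro x hx
        by_cases hxC : x ∈ C
        · obtain ⟨i, hi, rfl⟩ := Finset.mem_image.1 hxC
          exact ⟨0, by omega, i, Finset.mem_range.1 hi, rfl⟩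
        · obtain ⟨r, hr, i, hi, e⟩ := b3 x (Finset.mem_sdiff.2 ⟨hx, hxC⟩)
          exact ⟨r + 1, by omega, i, hi, e⟩

end AM

namespace AM

/-! ### From connectivity to explicit paths -/

theorem path_of {R : Set (ℂ × ℂ)} {u s t : ℂ} (h : Relation.ReflTransGen (St R u) s t) :
    ∃ (m : ℕ) (p : ℕ → ℂ), p 0 = s ∧ p m = t ∧ ∀ l < m, St R u (p l) (p (l + 1)) := by
  induction h with
  | refl => exact ⟨0, fun _ => s, rfl, rfl, fun l hl => absurd hl (by omega)⟩
  | @tail b z _ hbz ih =>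
    obtain ⟨m, p, h0, hm, hp⟩ := ih
    refine ⟨m + 1, fun l => if l ≤ m then p l else z, by simpa using h0, by simp, fun l hl => ?_⟩
    dsimp only
    rcases Nat.lt_or_ge l m with h | h
    · rw [if_pos (by omega), if_pos (by omega)]; exact hp l h
    · have : l = m := by omega
      subst this
      simpa [hm] using hbz

theorem norm_le_of_F {u v : ℂ} (h : F u v) :
    ‖v‖ * ‖u‖ ≤ (v.re * u.re + v.im * u.im) + (v.im * u.re - v.re * u.im) := by
  obtain ⟨h1, h2⟩ := h
  apply le_of_sq_le_sq _ (by positivity)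
  have e : (‖v‖ * ‖u‖) ^ 2 = (v.re * u.re + v.im * u.im) ^ 2 + (v.im * u.re - v.re * u.im) ^ 2 := by
    rw [mul_pow, Complex.sq_norm, Complex.sq_norm, Complex.normSq_apply, Complex.normSq_apply]; ring
  nlinarith [mul_nonneg h1 h2]

theorem le_norm (u v : ℂ) :
    (v.re * u.re + v.im * u.im) + (v.im * u.re - v.re * u.im) ≤ √2 * (‖v‖ * ‖u‖) := by
  apply le_of_sq_le_sq _ (by positivity)
  have e : (‖v‖ * ‖u‖) ^ 2 = (v.re * u.re + v.im * u.im) ^ 2 + (v.im * u.re - v.re * u.im) ^ 2 := by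
    rw [mul_pow, Complex.sq_norm, Complex.sq_norm, Complex.normSq_apply, Complex.normSq_apply]; ring
  rw [mul_pow, Real.sq_sqrt (by norm_num), e]
  nlinarith [sq_nonneg ((v.re * u.re + v.im * u.im) - (v.im * u.re - v.re * u.im))]

theorem final_path {T : Finset (ℂ × ℂ)} {s t : ℂ} (h : Cn (T : Set (ℂ × ℂ)) s t) :
    ∃ (m : ℕ) (p : ℕ → ℂ), p 0 = s ∧ p m = t ∧
          (∀ l < m, (p l, p (l + 1)) ∈ T ∨ (p (l + 1), p l) ∈ T) ∧
          (∃ d : ℂ, ‖d‖ = 1 ∧ ∀ l < m,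
            ‖p (l + 1) - p l‖ * Real.cos (π / 4) ≤ dot2 (p (l + 1) - p l) d) ∧
          ∑ l ∈ Finset.range m, ‖p (l + 1) - p l‖ ≤ Real.sqrt 2 * ‖t - s‖ := by
  obtain ⟨u, hu, h⟩ := h
  obtain ⟨m, p, h0, hm, hp⟩ := path_of h
  have hun : 0 < ‖u‖ := norm_pos_iff.2 hu
  have h2 : (0 : ℝ) < √2 := by positivity
  have h22 : √2 * √2 = 2 := Real.mul_self_sqrt (by norm_num)
  refine ⟨m, p, h0, hm, fun l hl => by simpa using (hp l hl).1, ?_, ?_⟩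
  · refine ⟨((√2 * ‖u‖)⁻¹ : ℝ) * (u * (1 + Complex.I)), ?_, fun l hl => ?_⟩
    · have e : ‖(1 + Complex.I : ℂ)‖ = √2 := by
        rw [Complex.norm_def, Complex.normSq_apply]; norm_num
      rw [norm_mul, norm_mul, e, Complex.norm_real, Real.norm_eq_abs, abs_of_pos (by positivity)]
      field_simp
    · have := norm_le_of_F (hp l hl).2
      set v := p (l + 1) - p l
      have e : dot2 v (((√2 * ‖u‖)⁻¹ : ℝ) * (u * (1 + Complex.I))) =
          ((v.re * u.re + v.im * u.im) + (v.im * u.re - v.re * u.im)) / (√2 * ‖u‖) := by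
        rw [dot2, Complex.re_ofReal_mul, Complex.im_ofReal_mul]
        simp only [Complex.mul_re, Complex.mul_im, Complex.add_re, Complex.add_im, Complex.one_re,
          Complex.one_im, Complex.I_re, Complex.I_im]
        field_simp
        ring
      rw [e, Real.cos_pi_div_four, le_div_iff₀ (by positivity)]
      calc ‖v‖ * (√2 / 2) * (√2 * ‖u‖) = ‖v‖ * ‖u‖ * (√2 * √2) / 2 := by ring
        _ = ‖v‖ * ‖u‖ := by rw [h22]; ring
        _ ≤ _ := this
  · let G : ℂ → ℝ := fun v => (v.re * u.re + v.im * u.im) + (v.im * u.re - v.re * u.im)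
    have hG : ∀ x y, G (x - y) = G x - G y := fun x y => by
      simp only [G, Complex.sub_re, Complex.sub_im]; ring
    have a1 : (∑ l ∈ Finset.range m, ‖p (l + 1) - p l‖) * ‖u‖ ≤ G (t - s) := by
      rw [Finset.sum_mul, hG, ← h0, ← hm, ← Finset.sum_range_sub (fun l => G (p l))]
      refine Finset.sum_le_sum fun l hl => ?_
      rw [← hG]
      exact norm_le_of_F (hp l (Finset.mem_range.1 hl)).2
    have a2 : G (t - s) ≤ √2 * (‖t - s‖ * ‖u‖) := le_norm u (t - s)
    refine le_of_mul_le_mul_right (a1.trans (a2.trans (le_of_eq ?_))) hun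
    ring

theorem enumerate (S : Finset ℂ) (hS : 2 ≤ S.card) : ∃ s : ℕ → ℂ, (Monotone fun i => (s i).re) ∧
    (∀ i, s i ∈ S) ∧ ∀ x ∈ S, ∃ i < S.card, s i = x := by
  let f : Fin S.card → ℝ := fun i => ((S.equivFin.symm i : S) : ℂ).re
  have hf := Tuple.monotone_sort f
  refine ⟨fun i => (S.equivFin.symm (Tuple.sort f ⟨min i (S.card - 1), by omega⟩) : S), ?_, ?_, ?_⟩
  · intro i j hij
    exact hf (show (⟨min i (S.card - 1), by omega⟩ : Fin S.card) ≤ ⟨min j (S.card - 1), by omega⟩ from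
      Fin.mk_le_mk.2 (by omega))
  · intro i
    exact Subtype.prop _
  · intro x hx
    let j := (Tuple.sort f).symm (S.equivFin ⟨x, hx⟩)
    refine ⟨j, j.2, ?_⟩
    have : (⟨min (j : ℕ) (S.card - 1), by omega⟩ : Fin S.card) = j := Fin.ext (by
      have := j.2
      simp only
      omega)
    dsimp only
    rw [this]
    simp [j]

theorem graph (S : Finset ℂ) (hS : 2 ≤ S.card) (k d : ℕ) (hk : k + 1 ≤ 2 ^ d) :
    ∃ (N : ℕ) (T : Finset (ℂ × ℂ)), (k + 1) * N ≤ S.card + (k + 1) * 2 ^ (4 * (k + 1)) ∧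
      (∀ e ∈ T, e.1 ∈ S ∧ e.2 ∈ S) ∧ T.card ≤ 7 * (N * N) * ((k + 1) * (d + 1)) ∧
      ∀ s ∈ S, ∀ t ∈ S, Cn (T : Set (ℂ × ℂ)) s t := by
  classical
  obtain ⟨s, s1, s2, s3⟩ := enumerate S hS
  obtain ⟨N, g, b1, b2, b3⟩ := partition s s1 k _ (Finset.range S.card) rfl
  rw [Finset.card_range] at b1
  have hp : ∀ r q : ℕ, ∃ T : Finset (ℂ × ℂ), (∀ e ∈ T, e.1 ∈ S ∧ e.2 ∈ S) ∧
      T.card ≤ 6 * (k + 1) * (d + 1) ∧ (r < N → q < N →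
        ∀ R : Set (ℂ × ℂ), (T : Set (ℂ × ℂ)) ⊆ R → (∀ i, (s (g r i), s (g r (i + 1))) ∈ R) →
      (∀ i, (s (g q i), s (g q (i + 1))) ∈ R) → ∀ i j, i < k + 1 ∧ j < k + 1 →
        Cn R (s (g r i)) (s (g q j))) := by
    intro r q
    by_cases h : r < N ∧ q < N
    · obtain ⟨T, h1, h2, h3⟩ := pair (V := (S : Set ℂ)) (a := fun i => s (g r i)) (b := fun i => s (g q i))
        (fun i => s2 _) (fun i => s2 _) (b2 r h.1).2.2 (b2 q h.2).2.2 (k + 1) d hk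
      exact ⟨T, h1, h2, fun _ _ => h3⟩
    · exact ⟨∅, by simp, by simp, fun h1 h2 => absurd ⟨h1, h2⟩ h⟩
  choose T T1 T2 T3 using hp
  let E : Finset (ℂ × ℂ) := (Finset.range N ×ˢ Finset.range (k + 1)).image
    fun x => (s (g x.1 x.2), s (g x.1 (x.2 + 1)))
  let TT : Finset (ℂ × ℂ) := (Finset.range N ×ˢ Finset.range N).biUnion (fun x => T x.1 x.2) ∪ E
  have hE : ∀ r < N, ∀ i, (s (g r i), s (g r (i + 1))) ∈ (TT : Set (ℂ × ℂ)) := by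
    intro r hr i
    refine Finset.mem_coe.2 (Finset.mem_union_right _ (Finset.mem_image.2 ?_))
    rcases Nat.lt_or_ge i (k + 1) with h | h
    · exact ⟨(r, i), by simp [hr, h], rfl⟩
    · refine ⟨(r, k), by simp [hr], ?_⟩
      have := (b2 r hr).2.1
      simp only
      rw [this i (by omega), this (i + 1) (by omega), this (k + 1) (by omega)]
  refine ⟨N, TT, b1, ?_, ?_, ?_⟩
  · intro e he
    rcases Finset.mem_union.1 he with he | he
    · obtain ⟨x, _, hx⟩ := Finset.mem_biUnion.1 he
      exact T1 _ _ e hx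
    · obtain ⟨x, _, rfl⟩ := Finset.mem_image.1 he
      exact ⟨s2 _, s2 _⟩
  · have c1 : ((Finset.range N ×ˢ Finset.range N).biUnion (fun x => T x.1 x.2)).card ≤
        (N * N) * (6 * (k + 1) * (d + 1)) := by
      refine (Finset.card_biUnion_le_card_mul _ _ _ fun x _ => T2 x.1 x.2).trans ?_
      simp
    have c2 : E.card ≤ N * (k + 1) := Finset.card_image_le.trans (by simp)
    have c3 : N * (k + 1) ≤ (N * N) * ((k + 1) * (d + 1)) := by
      rcases Nat.eq_zero_or_pos N with h | h
      · simp [h]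
      · exact Nat.mul_le_mul (Nat.le_mul_of_pos_left _ h) (Nat.le_mul_of_pos_right _ (by omega))
    refine (Finset.card_union_le _ _).trans ((Nat.add_le_add c1 (c2.trans c3)).trans (le_of_eq ?_))
    ring
  · intro x hx y hy
    obtain ⟨i, hi, rfl⟩ := s3 x hx
    obtain ⟨j, hj, rfl⟩ := s3 y hy
    obtain ⟨r, hr, i', hi', rfl⟩ := b3 i (Finset.mem_range.2 hi)
    obtain ⟨q, hq, j', hj', rfl⟩ := b3 j (Finset.mem_range.2 hj)
    refine T3 r q hr hq TT ?_ (hE r hr) (hE q hq) i' j' ⟨hi', hj'⟩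
    intro e he
    exact Finset.mem_coe.2 (Finset.mem_union_left _ (Finset.mem_biUnion.2 ⟨(r, q), by simp [hr, hq], he⟩))

theorem small (S : Finset ℂ) : ∃ T : Finset (ℂ × ℂ),
      (∀ e ∈ T, e.1 ∈ S ∧ e.2 ∈ S) ∧ T.card = S.card ^ 2 ∧
      ∀ s ∈ S, ∀ t ∈ S, Cn (T : Set (ℂ × ℂ)) s t := by
  refine ⟨S ×ˢ S, fun e he => Finset.mem_product.1 he, by rw [Finset.card_product, sq], ?_⟩
  intro s hs t ht
  by_cases h : s = t
  · subst h; exact ⟨1, one_ne_zero, .refl⟩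
  · refine ⟨t - s, sub_ne_zero.2 (Ne.symm h), .single ⟨.inl ?_, ?_, ?_⟩⟩
    · exact Finset.mem_coe.2 (Finset.mem_product.2 ⟨hs, ht⟩)
    · nlinarith [sq_nonneg (t - s).re, sq_nonneg (t - s).im]
    · apply le_of_eq; ring

theorem bound (S : Finset ℂ) (hS : 2 ≤ S.card) : ∃ T : Finset (ℂ × ℂ),
      (∀ e ∈ T, e.1 ∈ S ∧ e.2 ∈ S) ∧
      (T.card : ℝ) ≤
          2000 * (S.card : ℝ) ^ 2 * Real.log (Real.log (S.card + 4)) / Real.log (S.card + 4) ∧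
      ∀ s ∈ S, ∀ t ∈ S, Cn (T : Set (ℂ × ℂ)) s t := by
  set n := S.card with hn
  have hnR : (2 : ℝ) ≤ n := by exact_mod_cast hS
  have l2 := Real.log_two_gt_d9
  have l2' := Real.log_two_lt_d9
  set K := Nat.log 2 n with hK
  have hK1 : 2 ^ K ≤ n := Nat.pow_log_le_self 2 (by omega)
  have hK2 : n < 2 ^ (K + 1) := Nat.lt_pow_succ_log_self (by norm_num) n
  have hK0 : 1 ≤ K := by
    by_contra h
    have : K = 0 := by omega
    rw [this] at hK2; omega
  have hL1 : Real.log (n + 4) ≤ (K + 2 : ℝ) * Real.log 2 := by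
    have h4 : n + 4 ≤ 2 ^ (K + 2) := by
      have : 2 ^ 1 ≤ 2 ^ K := Nat.pow_le_pow_right (by norm_num) hK0
      rw [pow_succ] at hK2
      rw [pow_add]
      omega
    have h4' : (n + 4 : ℝ) ≤ 2 ^ (K + 2) := by exact_mod_cast h4
    calc Real.log (n + 4) ≤ Real.log (2 ^ (K + 2)) := Real.log_le_log (by positivity) h4'
      _ = _ := by rw [Real.log_pow]; push_cast; ring
  have hL1' : (K : ℝ) * Real.log 2 ≤ Real.log (n + 4) := by
    have h4' : (2 : ℝ) ^ K ≤ n + 4 := by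
      have : (2 : ℝ) ^ K ≤ n := by exact_mod_cast hK1
      linarith
    calc _ = Real.log (2 ^ K) := by rw [Real.log_pow]
      _ ≤ _ := Real.log_le_log (by positivity) h4'
  set L1 := Real.log (n + 4) with hL1d
  rcases Nat.lt_or_ge K 8 with h | h
  · obtain ⟨T, h1, h2, h3⟩ := small S
    refine ⟨T, h1, ?_, h3⟩
    have hK8 : (K : ℝ) ≤ 7 := by exact_mod_cast (by omega : K ≤ 7)
    have b1 : L1 ≤ 9 := by nlinarith
    have b0 : 1.38 ≤ L1 := by
      have : Real.log (2 ^ 2) ≤ L1 := Real.log_le_log (by norm_num) (by linarith)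
      rw [Real.log_pow] at this
      push_cast at this
      linarith
    have b2 : 0.2 ≤ Real.log L1 := by
      have := Real.one_sub_inv_le_log_of_pos (by linarith : 0 < L1)
      have h' : L1⁻¹ ≤ (1.38 : ℝ)⁻¹ := inv_anti₀ (by norm_num) b0
      norm_num at h'
      linarith
    rw [h2, le_div_iff₀ (by linarith)]
    push_cast
    have : 0 ≤ (n : ℝ) ^ 2 := by positivity
    nlinarith [mul_nonneg this (by linarith : 0 ≤ 2000 * Real.log L1 - L1)]
  · obtain ⟨k, hk⟩ : ∃ k, K / 8 = k + 1 := ⟨K / 8 - 1, by omega⟩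
    set d := Nat.log 2 (k + 1) + 1 with hd
    have hkd : k + 1 ≤ 2 ^ d := (Nat.lt_pow_succ_log_self (by norm_num) (k + 1)).le
    obtain ⟨N, T, h0, h1, h2, h3⟩ := graph S hS k d hkd
    refine ⟨T, h1, ?_, h3⟩
    rw [← hn] at h0
    have e1 : (k + 1) * 2 ^ (4 * (k + 1)) ≤ n := by
      calc (k + 1) * 2 ^ (4 * (k + 1)) ≤ 2 ^ (k + 1) * 2 ^ (4 * (k + 1)) :=
            Nat.mul_le_mul_right _ (Nat.lt_two_pow_self).le
        _ = 2 ^ (5 * (k + 1)) := by rw [← pow_add]; congr 1; ring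
        _ ≤ 2 ^ K := Nat.pow_le_pow_right (by norm_num) (by omega)
        _ ≤ n := hK1
    have e2 : (k + 1) * N ≤ 2 * n := by omega
    have e3 : (k + 1) * T.card ≤ 28 * n ^ 2 * (d + 1) := by
      calc (k + 1) * T.card ≤ (k + 1) * (7 * (N * N) * ((k + 1) * (d + 1))) := Nat.mul_le_mul_left _ h2
        _ = 7 * (((k + 1) * N) * ((k + 1) * N)) * (d + 1) := by ring
        _ ≤ 7 * ((2 * n) * (2 * n)) * (d + 1) := by gcongr
        _ = _ := by ring
    have e3' : ((k : ℝ) + 1) * T.card ≤ 28 * (n : ℝ) ^ 2 * (d + 1) := by exact_mod_cast e3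
    have f1 : L1 ≤ 17 * ((k : ℝ) + 1) := by
      have : K ≤ 8 * (k + 1) + 7 := by omega
      have : (K : ℝ) ≤ 8 * ((k : ℝ) + 1) + 7 := by exact_mod_cast this
      have : (0 : ℝ) ≤ k := by positivity
      nlinarith
    have f2 : (k : ℝ) + 1 ≤ L1 := by
      have : 8 * (k + 1) ≤ K := by omega
      have : 8 * ((k : ℝ) + 1) ≤ (K : ℝ) := by exact_mod_cast this
      have : (0 : ℝ) ≤ k := by positivity
      nlinarith
    have f3 : 5 ≤ L1 := by
      have : (8 : ℝ) ≤ K := by exact_mod_cast h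
      nlinarith
    have f4 : 1 ≤ Real.log L1 := by
      rw [Real.le_log_iff_exp_le (by linarith)]
      linarith [Real.exp_one_lt_d9]
    have f5 : (Nat.log 2 (k + 1) : ℝ) * Real.log 2 ≤ Real.log L1 := by
      have : 2 ^ Nat.log 2 (k + 1) ≤ k + 1 := Nat.pow_log_le_self 2 (by omega)
      have : (2 : ℝ) ^ Nat.log 2 (k + 1) ≤ (k : ℝ) + 1 := by exact_mod_cast this
      rw [← Real.log_pow]
      exact Real.log_le_log (by positivity) (this.trans f2)
    have f6 : (d : ℝ) + 1 ≤ 4 * Real.log L1 := by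
      rw [hd]
      push_cast
      have : (0 : ℝ) ≤ (Nat.log 2 (k + 1) : ℝ) := by positivity
      nlinarith
    rw [le_div_iff₀ (by linarith)]
    have hT : (0 : ℝ) ≤ T.card := by positivity
    calc (T.card : ℝ) * L1 ≤ T.card * (17 * ((k : ℝ) + 1)) := by gcongr
      _ = 17 * (((k : ℝ) + 1) * T.card) := by ring
      _ ≤ 17 * (28 * (n : ℝ) ^ 2 * (d + 1)) := by gcongr
      _ ≤ 17 * (28 * (n : ℝ) ^ 2 * (4 * Real.log L1)) := by gcongr
      _ = 1904 * ((n : ℝ) ^ 2 * Real.log L1) := by ring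
      _ ≤ 2000 * ((n : ℝ) ^ 2 * Real.log L1) := by gcongr; norm_num
      _ = _ := by ring

end AM

/-- Every finite set `S` of `n ≥ 2` points in general position admits a
geometric graph with `O(n² log log n / log n)` edges in which every pair of points is
joined by a path whose edge vectors all lie in a common closed `90°` wedge (an
angle-monotone graph of width `90°`); such a path has length at most `√2` times the
distance between its endpoints, so the graph is a `√2`-spanner. -/
theorem subquadratic_angle_monotone_graph :
    ∃ Cst : ℝ, 0 < Cst ∧ ∀ S : Finset ℂ, 2 ≤ S.card → GenPos S →
      ∃ T : Finset (ℂ × ℂ),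
        (∀ e ∈ T, e.1 ∈ S ∧ e.2 ∈ S) ∧
        (T.card : ℝ) ≤
          Cst * (S.card : ℝ) ^ 2 * Real.log (Real.log (S.card + 4)) / Real.log (S.card + 4) ∧
        ∀ s ∈ S, ∀ t ∈ S, ∃ (m : ℕ) (p : ℕ → ℂ), p 0 = s ∧ p m = t ∧
          (∀ l < m, (p l, p (l + 1)) ∈ T ∨ (p (l + 1), p l) ∈ T) ∧
          (∃ d : ℂ, ‖d‖ = 1 ∧ ∀ l < m,
            ‖p (l + 1) - p l‖ * Real.cos (π / 4) ≤ dot2 (p (l + 1) - p l) d) ∧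
          ∑ l ∈ Finset.range m, ‖p (l + 1) - p l‖ ≤ Real.sqrt 2 * ‖t - s‖ := by

  refine ⟨2000, by norm_num, fun S hS _ => ?_⟩
  obtain ⟨T, h1, h2, h3⟩ := AM.bound S hS
  exact ⟨T, h1, h2, fun s hs t ht => AM.final_path (h3 s hs t ht)⟩
end
end

section
/- In a 3-sweep graph with wedge angles θ_a, θ_b, θ_c, if v lies on the a-path P_{q,a} of a point q, then every edge vector along the subpath from q to v lies in the closed wedge of angle θ_a (the translate of the wedge W_{·,a}); hence the path from q to v is angle-monotone of width θ_a and its length is at most (1/cos(θ_a/2)) · ‖v − q‖. -/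
open Real

noncomputable section

/-- Counterclockwise rotation of a plane vector by `90°`. -/
def perp2 (u : ℂ) : ℂ := Complex.I * u

/-- Membership in the closed wedge with apex `q` spanned by the directions `X` and `Y`. -/
def InWedge (X Y q p : ℂ) : Prop :=
  ∃ s u : ℝ, 0 ≤ s ∧ 0 ≤ u ∧ p - q = s • X + u • Y

/-- `p` is a sweep-nearest neighbor of `q` in the wedge spanned by `X` and `Y`. -/
def IsSweepNbr (X Y : ℂ) (S : Finset ℂ) (q p : ℂ) : Prop :=
  p ∈ S ∧ p ≠ q ∧ InWedge X Y q p ∧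
    ∀ r ∈ S, r ≠ q → InWedge X Y q r →
      |dot2 (perp2 (X - Y)) (p - q)| ≤ |dot2 (perp2 (X - Y)) (r - q)|

theorem dot2_eq_inner (u v : ℂ) : dot2 u v = inner ℝ u v := by
  simp [dot2, Complex.inner, Complex.mul_re]
  try ring

theorem exists_bisector (X Y : ℂ) (hXY : 0 < inner ℝ X Y) :
    0 < Real.cos (InnerProductGeometry.angle X Y / 2) ∧
    ∃ d : ℂ, ‖d‖ = 1 ∧ ∀ s u : ℝ, 0 ≤ s → 0 ≤ u →
      ‖s • X + u • Y‖ * Real.cos (InnerProductGeometry.angle X Y / 2) ≤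
        inner ℝ (s • X + u • Y) d := by
  have hX : X ≠ 0 := by rintro rfl; simp at hXY
  have hY : Y ≠ 0 := by rintro rfl; simp at hXY
  have hx : 0 < ‖X‖ := norm_pos_iff.2 hX
  have hy : 0 < ‖Y‖ := norm_pos_iff.2 hY
  have hlt : InnerProductGeometry.angle X Y < π / 2 := by
    rw [InnerProductGeometry.angle, Real.arccos_lt_pi_div_two]
    positivity
  have h0 := InnerProductGeometry.angle_nonneg X Y
  have hc := InnerProductGeometry.cos_angle X Y
  set θ := InnerProductGeometry.angle X Y with hθ
  have hk : 0 < Real.cos (θ / 2) :=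
    Real.cos_pos_of_mem_Ioo ⟨by linarith [Real.pi_pos], by linarith [Real.pi_pos]⟩
  have hdbl : Real.cos θ = 2 * Real.cos (θ / 2) ^ 2 - 1 := by
    rw [← Real.cos_two_mul]; congr 1; ring
  set k := Real.cos (θ / 2) with hkdef
  have hin : inner ℝ X Y = (2 * k ^ 2 - 1) * (‖X‖ * ‖Y‖) := by
    rw [← hdbl, hc]; field_simp
  have hin' : inner ℝ Y X = (2 * k ^ 2 - 1) * (‖X‖ * ‖Y‖) := by
    rw [real_inner_comm, hin]
  set d : ℂ := (1 / (2 * k * ‖X‖)) • X + (1 / (2 * k * ‖Y‖)) • Y with hd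
  have hXd : inner ℝ X d = k * ‖X‖ := by
    rw [hd, inner_add_right, real_inner_smul_right, real_inner_smul_right, hin,
      real_inner_self_eq_norm_sq]
    field_simp
    ring
  have hYd : inner ℝ Y d = k * ‖Y‖ := by
    rw [hd, inner_add_right, real_inner_smul_right, real_inner_smul_right, hin',
      real_inner_self_eq_norm_sq]
    field_simp
    ring
  have hdd : ‖d‖ ^ 2 = 1 := by
    rw [← real_inner_self_eq_norm_sq]
    nth_rewrite 1 [hd]
    rw [inner_add_left, real_inner_smul_left, real_inner_smul_left, hXd, hYd]
    field_simp
    ring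
  refine ⟨hk, d, ?_, ?_⟩
  · nlinarith [norm_nonneg d]
  · intro s u hs hu
    rw [inner_add_left, real_inner_smul_left, real_inner_smul_left, hXd, hYd]
    have h := norm_add_le (s • X) (u • Y)
    rw [norm_smul, norm_smul, Real.norm_of_nonneg hs, Real.norm_of_nonneg hu] at h
    nlinarith

/-- Along an `a`-path `v 0, …, v m` of a 3-sweep graph (each `v (l+1)`
an `a`-nearest neighbor of `v l`), every edge vector lies in the fixed cone of angle
`θ_a` spanned by `B - A` and `C - A`; hence the path is angle-monotone of width `θ_a`
and its length is at most `(1 / cos (θ_a / 2)) · ‖v m - v 0‖`. -/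
theorem a_path_angle_monotone (A B C : ℂ)
    (hacuteA : 0 < dot2 (B - A) (C - A)) (hacuteB : 0 < dot2 (A - B) (C - B))
    (hacuteC : 0 < dot2 (A - C) (B - C))
    (hnd : ¬ Collinear ℝ ({A, B, C} : Set ℂ))
    (S : Finset ℂ) (m : ℕ) (v : ℕ → ℂ)
    (hchain : ∀ l < m, IsSweepNbr (B - A) (C - A) S (v l) (v (l + 1))) :
    (∀ l < m, ∃ s u : ℝ, 0 ≤ s ∧ 0 ≤ u ∧ v (l + 1) - v l = s • (B - A) + u • (C - A)) ∧
    (∃ d : ℂ, ‖d‖ = 1 ∧ ∀ l < m,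
      ‖v (l + 1) - v l‖ * Real.cos (InnerProductGeometry.angle (B - A) (C - A) / 2) ≤
        dot2 (v (l + 1) - v l) d) ∧
    ∑ l ∈ Finset.range m, ‖v (l + 1) - v l‖ ≤
      (1 / Real.cos (InnerProductGeometry.angle (B - A) (C - A) / 2)) * ‖v m - v 0‖ := by
  have h1 : ∀ l < m, ∃ s u : ℝ, 0 ≤ s ∧ 0 ≤ u ∧
      v (l + 1) - v l = s • (B - A) + u • (C - A) := fun l hl => (hchain l hl).2.2.1
  rw [dot2_eq_inner] at hacuteA
  obtain ⟨hk, d, hd, hw⟩ := exists_bisector _ _ hacuteA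
  have h2 : ∀ l < m,
      ‖v (l + 1) - v l‖ * Real.cos (InnerProductGeometry.angle (B - A) (C - A) / 2) ≤
        dot2 (v (l + 1) - v l) d := by
    intro l hl
    obtain ⟨s, u, hs, hu, h⟩ := h1 l hl
    rw [dot2_eq_inner, h]
    exact hw s u hs hu
  refine ⟨h1, ⟨d, hd, h2⟩, ?_⟩
  rw [one_div, inv_mul_eq_div, le_div_iff₀ hk, Finset.sum_mul]
  calc _ ≤ ∑ l ∈ Finset.range m, inner ℝ (v (l + 1) - v l) d :=
        Finset.sum_le_sum fun l hl => by
          rw [← dot2_eq_inner]; exact h2 l (Finset.mem_range.1 hl)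
    _ = inner ℝ (v m - v 0) d := by rw [← sum_inner, Finset.sum_range_sub]
    _ ≤ ‖v m - v 0‖ * ‖d‖ := real_inner_le_norm _ _
    _ = ‖v m - v 0‖ := by rw [hd, mul_one]
end
end
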